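/- Let n ≥ 1 and let r, s > 0 and t > −1 satisfy r + s − t > n + 1. Then for all z, u ∈ T_B, ∫_{T_B} ρ(w)^t · ρ(z,w)^{−r} · ρ(w,u)^{−s} dV(w) = C₁ · ρ(z,u)^{−(r+s−t−n−1)}, where C₁ = 2^{n+1} πⁿ Γ(1+t) Γ(r+s−t−n−1) / (Γ(r) Γ(s)), the integral converging absolutely. -/

import Mathlib

open MeasureTheory Complex ComplexConjugate

noncomputable section

/-- The tube domain `T_B ⊆ ℂ^(n+1)` (paper dimension `n+1 ≥ 1`). -/
def TB (n : ℕ) : Set (Fin (n + 1) → ℂ) :=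
  {z | ∑ k : Fin n, (z k.castSucc).im ^ 2 < (z (Fin.last n)).im}

/-- `ρ(z) = y_n − |y'|²`. -/
def rho (n : ℕ) (z : Fin (n + 1) → ℂ) : ℝ :=
  (z (Fin.last n)).im - ∑ k : Fin n, (z k.castSucc).im ^ 2

/-- `ρ(z,w) = (1/4)(Σ (z_k − conj w_k)² − 2i(z_n − conj w_n))`. -/
def rho2 (n : ℕ) (z w : Fin (n + 1) → ℂ) : ℂ :=
  (1 / 4) * ((∑ k : Fin n, (z k.castSucc - conj (w k.castSucc)) ^ 2)
    - 2 * Complex.I * (z (Fin.last n) - conj (w (Fin.last n))))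

/-- The point `𝐢 = (0,…,0,i) ∈ T_B`. -/
def iPt (n : ℕ) : Fin (n + 1) → ℂ := fun j => if j = Fin.last n then Complex.I else 0

/-- `c_α = Γ(n+1+α)/(2^(n+1) πⁿ Γ(α+1))` (paper `n` = `n+1` here). -/
def cA (n : ℕ) (α : ℝ) : ℝ :=
  Real.Gamma ((n : ℝ) + 2 + α) / (2 ^ (n + 2) * Real.pi ^ (n + 1) * Real.Gamma (α + 1))

/-- Wirtinger derivative `∂g/∂z_j = (1/2)(∂g/∂x_j − i ∂g/∂y_j)`. -/
def wdz (n : ℕ) (j : Fin (n + 1)) (g : (Fin (n + 1) → ℂ) → ℂ) : (Fin (n + 1) → ℂ) → ℂ :=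
  fun z => (1 / 2) * (fderiv ℝ g z (Pi.single j 1) - Complex.I * fderiv ℝ g z (Pi.single j Complex.I))

/-- Wirtinger derivative `∂g/∂z̄_j = (1/2)(∂g/∂x_j + i ∂g/∂y_j)`. -/
def wdzbar (n : ℕ) (j : Fin (n + 1)) (g : (Fin (n + 1) → ℂ) → ℂ) : (Fin (n + 1) → ℂ) → ℂ :=
  fun z => (1 / 2) * (fderiv ℝ g z (Pi.single j 1) + Complex.I * fderiv ℝ g z (Pi.single j Complex.I))


section helpers

open Set Filter Topology

lemma gam_real_int {a b : ℝ} (ha : 0 < a) (hb : 0 < b) :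
    IntegrableOn (fun x : ℝ => x ^ (a - 1) * Real.exp (-(b * x))) (Ioi 0) := by
  have := integrableOn_rpow_mul_exp_neg_mul_rpow (p := 1) (s := a - 1) (b := b) (by linarith) one_pos hb
  simpa using this

lemma gam_meas (a : ℝ) (c : ℂ) :
    Measurable (fun x : ℝ => ((x ^ (a - 1) : ℝ) : ℂ) * cexp (-(c * x))) := by
  have h1 : Measurable (fun x : ℝ => x ^ (a - 1)) := measurable_id.pow_const _
  have h2 : Measurable (fun x : ℝ => ((x ^ (a - 1) : ℝ) : ℂ)) := Complex.measurable_ofReal.comp h1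
  exact h2.mul (by fun_prop)

lemma gam_norm (a : ℝ) (c : ℂ) {x : ℝ} (hx : 0 < x) :
    ‖((x ^ (a - 1) : ℝ) : ℂ) * cexp (-(c * x))‖ = x ^ (a - 1) * Real.exp (-(c.re * x)) := by
  rw [norm_mul, Complex.norm_real, Complex.norm_exp, Real.norm_of_nonneg (by positivity)]
  simp

lemma gam_int {a : ℝ} {c : ℂ} (ha : 0 < a) (hc : 0 < c.re) :
    IntegrableOn (fun x : ℝ => ((x ^ (a - 1) : ℝ) : ℂ) * cexp (-(c * x))) (Ioi 0) := by
  refine Integrable.mono' (gam_real_int ha hc) (gam_meas a c).aestronglyMeasurable ?_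
  filter_upwards [ae_restrict_mem measurableSet_Ioi] with x hx
  exact (gam_norm a c hx).le

lemma gam_diff {a : ℝ} (ha : 0 < a) :
    DifferentiableOn ℂ (fun c : ℂ => ∫ x in Ioi (0:ℝ), ((x ^ (a - 1) : ℝ) : ℂ) * cexp (-(c * x)))
      {c : ℂ | 0 < c.re} := by
  intro c hc
  have hc' : 0 < c.re := hc
  refine DifferentiableAt.differentiableWithinAt ?_
  have hs : {w : ℂ | c.re / 2 < w.re} ∈ 𝓝 c :=
    (isOpen_lt continuous_const Complex.continuous_re).mem_nhds (by simp; linarith)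
  refine (hasDerivAt_integral_of_dominated_loc_of_deriv_le (𝕜 := ℂ)
    (F' := fun w x => ((x ^ (a - 1) : ℝ) : ℂ) * (cexp (-(w * x)) * (-(x:ℂ))))
    (bound := fun x : ℝ => x ^ ((a + 1) - 1) * Real.exp (-(c.re / 2 * x))) hs ?_ ?_ ?_ ?_ ?_ ?_).2.differentiableAt
  · exact Eventually.of_forall fun w => (gam_meas a w).aestronglyMeasurable
  · exact gam_int ha hc'
  · have h1 : Measurable (fun x : ℝ => x ^ (a - 1)) := measurable_id.pow_const _
    have h2 : Measurable (fun x : ℝ => ((x ^ (a - 1) : ℝ) : ℂ)) := Complex.measurable_ofReal.comp h1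
    exact (h2.mul (by fun_prop)).aestronglyMeasurable
  · filter_upwards [ae_restrict_mem measurableSet_Ioi] with x hx w hw
    have hx : 0 < x := hx
    rw [← mul_assoc, norm_mul, gam_norm a w hx, norm_neg, Complex.norm_real,
      Real.norm_of_nonneg hx.le, add_sub_cancel_right]
    have : x ^ a = x ^ (a - 1) * x := by
      rw [← Real.rpow_add_one hx.ne']; simp
    rw [this, mul_right_comm]
    have hw : c.re / 2 < w.re := hw
    gcongr
  · exact gam_real_int (by linarith) (by linarith)
  · filter_upwards with x w hw
    refine HasDerivAt.const_mul _ ?_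
    refine HasDerivAt.cexp ?_
    simpa using! ((hasDerivAt_id w).mul_const (x:ℂ)).fun_neg

lemma gam_val {a : ℝ} {c : ℂ} (ha : 0 < a) (hc : 0 < c.re) :
    ∫ x in Ioi (0:ℝ), ((x ^ (a - 1) : ℝ) : ℂ) * cexp (-(c * x))
      = (Real.Gamma a : ℂ) * c ^ (-(a : ℂ)) := by
  have hU : IsOpen {c : ℂ | 0 < c.re} := isOpen_lt continuous_const Complex.continuous_re
  have hconv : Convex ℝ {c : ℂ | 0 < c.re} := convex_halfSpace_re_gt 0
  have h1 := (gam_diff ha).analyticOnNhd hU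
  have h2 : AnalyticOnNhd ℂ (fun c : ℂ => (Real.Gamma a : ℂ) * c ^ (-(a : ℂ))) {c : ℂ | 0 < c.re} := by
    refine DifferentiableOn.analyticOnNhd ?_ hU
    intro w hw
    refine DifferentiableAt.differentiableWithinAt ?_
    refine DifferentiableAt.const_mul ?_ _
    exact DifferentiableAt.cpow_const differentiableAt_id (Or.inl hw)
  refine h1.eqOn_of_preconnected_of_frequently_eq h2 hconv.isPreconnected (z₀ := 1) (by simp) ?_ hc
  have hreal : ∀ y : ℝ, 0 < y → ∫ x in Ioi (0:ℝ), ((x ^ (a - 1) : ℝ) : ℂ) * cexp (-((y:ℂ) * x))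
      = (Real.Gamma a : ℂ) * (y:ℂ) ^ (-(a : ℂ)) := by
    intro y hy
    have := Real.integral_rpow_mul_exp_neg_mul_Ioi ha hy
    have h3 : ∀ x : ℝ, ((x ^ (a - 1) : ℝ) : ℂ) * cexp (-((y:ℂ) * x)) =
      ((x ^ (a - 1) * Real.exp (-(y * x)) : ℝ) : ℂ) := by intro x; push_cast; rfl
    simp_rw [h3]
    rw [integral_complex_ofReal, this, mul_comm, one_div, Real.inv_rpow hy.le, ← Real.rpow_neg hy.le]
    push_cast
    rw [Complex.ofReal_cpow hy.le]
    push_cast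
    rfl
  have ht : Tendsto (fun k : ℕ => ((1 + 1 / ((k:ℝ) + 1) : ℝ) : ℂ)) atTop (𝓝[≠] 1) := by
    refine tendsto_nhdsWithin_iff.2 ⟨?_, Eventually.of_forall fun k => ?_⟩
    · have := (tendsto_one_div_add_atTop_nhds_zero_nat (𝕜 := ℝ)).const_add 1
      rw [add_zero] at this
      have h4 := (Complex.continuous_ofReal.tendsto 1).comp this
      rw [ofReal_one] at h4
      exact h4
    · have h0 : (1 / ((k:ℝ) + 1)) ≠ 0 := by positivity
      simp only [mem_compl_iff, mem_singleton_iff]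
      intro h
      have h' : (1 + 1 / ((k:ℝ) + 1) : ℝ) = 1 := by exact_mod_cast h
      exact h0 (by linarith)
  refine ht.frequently (Frequently.of_forall fun k => hreal _ (by positivity))

/-- the vertical line `a + 2πiv` -/
def vl (a : ℂ) (v : ℝ) : ℂ := a + 2 * Real.pi * v * I

lemma vl_re (a : ℂ) (v : ℝ) : (vl a v).re = a.re := by simp [vl]

lemma vl_im (a : ℂ) (v : ℝ) : (vl a v).im = a.im + 2 * Real.pi * v := by simp [vl]

lemma vl_ne {a : ℂ} (ha : 0 < a.re) (v : ℝ) : vl a v ≠ 0 := by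
  intro h
  have := vl_re a v
  rw [h] at this
  simp at this
  linarith

lemma vl_cont (a : ℂ) : Continuous (vl a) := by unfold vl; fun_prop

/-- exact scaling of the norm powers on a vertical line -/
lemma line_norm {p : ℝ} {c : ℂ} (hc : 0 < c.re) {k : ℝ} (x : ℝ) :
    ‖c + k * x * I‖ ^ (-p) = c.re ^ (-p) * (1 + ‖k / c.re * x + c.im / c.re‖ ^ 2) ^ (-p / 2) := by
  have h1 : ‖c + k * x * I‖ ^ 2 = c.re ^ 2 * (1 + ‖k / c.re * x + c.im / c.re‖ ^ 2) := by
    rw [← Complex.normSq_eq_norm_sq, Complex.normSq_apply, Real.norm_eq_abs, sq_abs]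
    simp
    field_simp
    ring
  have h2 : ∀ y : ℝ, 0 ≤ y → y ^ (-p) = (y ^ 2) ^ (-p / 2) := by
    intro y hy
    rw [← Real.rpow_natCast y 2, ← Real.rpow_mul hy]
    congr 1; push_cast; ring
  rw [h2 _ (norm_nonneg _), h1, Real.mul_rpow (by positivity) (by positivity), ← h2 _ hc.le]

lemma line_int {p : ℝ} (hp : 1 < p) {c : ℂ} (hc : 0 < c.re) {k : ℝ} (hk : k ≠ 0) :
    Integrable (fun x : ℝ => ‖c + k * x * I‖ ^ (-p)) := by
  simp_rw [line_norm hc]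
  have h := integrable_rpow_neg_one_add_norm_sq (E := ℝ) (μ := volume) (r := p) (by simpa using hp)
  exact ((h.comp_add_right (c.im / c.re)).comp_mul_left' (R := k / c.re)
    (div_ne_zero hk hc.ne')).const_mul _

lemma line_val {p : ℝ} {c : ℂ} (hc : 0 < c.re) {k : ℝ} (hk : 0 < k) :
    ∫ x : ℝ, ‖c + k * x * I‖ ^ (-p) =
      c.re ^ (1 - p) * (k⁻¹ * ∫ x : ℝ, (1 + ‖x‖ ^ 2) ^ (-p / 2)) := by
  simp_rw [line_norm hc]
  rw [integral_const_mul,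
    Measure.integral_comp_mul_left (fun y : ℝ => (1 + ‖y + c.im / c.re‖ ^ 2) ^ (-p / 2)),
    integral_add_right_eq_self (fun y : ℝ => (1 + ‖y‖ ^ 2) ^ (-p / 2)),
    abs_of_pos (by positivity), sub_eq_neg_add, Real.rpow_add_one hc.ne', smul_eq_mul]
  field_simp

lemma vl_norm_int {p : ℝ} (hp : 1 < p) {a : ℂ} (ha : 0 < a.re) :
    Integrable (fun v : ℝ => ‖vl a v‖ ^ (-p)) := by
  have := line_int hp ha (k := 2 * Real.pi) (by positivity)
  simpa [vl] using this

lemma vl_norm_le {a b : ℂ} (ha : 0 < a.re) (hb : 0 < b.re) (v : ℝ) :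
    ‖vl a v‖ ≤ (1 + ‖a + b‖ / b.re) * ‖vl b (-v)‖ := by
  have h1 : vl a v = (a + b) - vl b (-v) := by simp [vl]; ring
  have h2 : b.re ≤ ‖vl b (-v)‖ := by
    have := Complex.re_le_norm (vl b (-v)); rwa [vl_re] at this
  have h3 : ‖a + b‖ ≤ ‖a + b‖ / b.re * ‖vl b (-v)‖ := by
    rw [div_mul_eq_mul_div, le_div_iff₀ hb]; gcongr
  have h4 : ‖vl a v‖ ≤ ‖a + b‖ + ‖vl b (-v)‖ := by rw [h1]; exact norm_sub_le _ _
  linarith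

lemma vl_bound {a b : ℂ} (ha : 0 < a.re) (hb : 0 < b.re) (x y : ℝ) :
    ∃ C : ℝ, ∀ v : ℝ, ‖vl a v ^ (x : ℂ) * vl b (-v) ^ (y : ℂ)‖ ≤ C * ‖vl b (-v)‖ ^ (x + y) := by
  have hpos : ∀ v, 0 < ‖vl b (-v)‖ := fun v => norm_pos_iff.2 (vl_ne hb _)
  have hposa : ∀ v, 0 < ‖vl a v‖ := fun v => norm_pos_iff.2 (vl_ne ha _)
  have key : ∃ C : ℝ, ∀ v : ℝ, ‖vl a v‖ ^ x ≤ C * ‖vl b (-v)‖ ^ x := by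
    rcases le_total 0 x with hx | hx
    · refine ⟨(1 + ‖a + b‖ / b.re) ^ x, fun v => ?_⟩
      rw [← Real.mul_rpow (by positivity) (by positivity)]
      exact Real.rpow_le_rpow (by positivity) (vl_norm_le ha hb v) hx
    · refine ⟨((1 + ‖b + a‖ / a.re)⁻¹) ^ x, fun v => ?_⟩
      rw [← Real.mul_rpow (by positivity) (by positivity)]
      refine Real.rpow_le_rpow_of_nonpos (mul_pos (by positivity) (hpos v)) ?_ hx
      have := vl_norm_le hb ha (-v)
      rw [neg_neg] at this
      rw [inv_mul_le_iff₀ (by positivity)]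
      exact this
  obtain ⟨C, hC⟩ := key
  refine ⟨C, fun v => ?_⟩
  rw [norm_mul, Complex.norm_cpow_real, Complex.norm_cpow_real, Real.rpow_add (hpos v), ← mul_assoc]
  gcongr
  exact hC v

lemma vl_cpow_cont {a : ℂ} (ha : 0 < a.re) (x : ℂ) : Continuous (fun v => vl a v ^ x) := by
  refine Continuous.cpow (vl_cont a) continuous_const (fun v => Or.inl ?_)
  rw [vl_re]; exact ha

lemma J_int {a b : ℂ} (ha : 0 < a.re) (hb : 0 < b.re) {x y : ℝ} (h : x + y < -1) :
    Integrable (fun v : ℝ => vl a v ^ (x : ℂ) * vl b (-v) ^ (y : ℂ)) := by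
  obtain ⟨C, hC⟩ := vl_bound ha hb x y
  have h1 := (vl_norm_int (p := -(x + y)) (by linarith) hb).comp_neg
  rw [neg_neg] at h1
  refine Integrable.mono' (h1.const_mul C) ?_ (Eventually.of_forall hC)
  exact ((vl_cpow_cont ha _).mul ((vl_cpow_cont hb _).comp continuous_neg)).aestronglyMeasurable

lemma J_tendsto {a b : ℂ} (ha : 0 < a.re) (hb : 0 < b.re) {x y : ℝ} (h : x + y < 0) :
    Tendsto (fun v : ℝ => vl a v ^ (x : ℂ) * vl b (-v) ^ (y : ℂ)) (cocompact ℝ) (𝓝 0) := by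
  obtain ⟨C, hC⟩ := vl_bound ha hb x y
  refine squeeze_zero_norm hC ?_
  have h1 : Tendsto (fun v : ℝ => ‖vl b (-v)‖) (cocompact ℝ) atTop := by
    refine tendsto_atTop_mono (f := fun v : ℝ => 2 * Real.pi * ‖v‖ - |b.im|) (fun v => ?_) ?_
    · have := Complex.abs_im_le_norm (vl b (-v))
      rw [vl_im] at this
      have h2 := abs_sub_abs_le_abs_sub (2 * Real.pi * v) b.im
      rw [abs_mul, abs_of_pos (by positivity : 0 < 2 * Real.pi), abs_sub_comm] at h2
      rw [Real.norm_eq_abs]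
      rw [mul_neg, ← sub_eq_add_neg] at this
      linarith
    · have := (tendsto_norm_cocompact_atTop (E := ℝ)).const_mul_atTop (by positivity : 0 < 2 * Real.pi)
      exact tendsto_atTop_add_const_right _ _ this
  have h2 := (tendsto_rpow_neg_atTop (y := -(x + y)) (by linarith)).comp h1
  rw [neg_neg] at h2
  simpa using h2.const_mul C

lemma J_rec {a b : ℂ} (ha : 0 < a.re) (hb : 0 < b.re) {r s : ℝ} (hrs : 1 < r + s) :
    (s : ℂ) * (a + b) * ∫ v : ℝ, vl a v ^ ((-r : ℝ) : ℂ) * vl b (-v) ^ ((-(s + 1) : ℝ) : ℂ)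
      = ((r + s - 1 : ℝ) : ℂ) * ∫ v : ℝ, vl a v ^ ((-r : ℝ) : ℂ) * vl b (-v) ^ ((-s : ℝ) : ℂ) := by
  have i1 := J_int ha hb (x := -r) (y := -s) (by linarith)
  have i2 := J_int ha hb (x := 1 - r) (y := -(s + 1)) (by linarith)
  have i3 := J_int ha hb (x := -r) (y := -(s + 1)) (by linarith)
  have t := J_tendsto ha hb (x := 1 - r) (y := -s) (by linarith)
  have hder : ∀ v : ℝ, HasDerivAt (fun v : ℝ => vl a v ^ ((1 - r : ℝ) : ℂ) * vl b (-v) ^ ((-s : ℝ) : ℂ))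
      ((2 * Real.pi * I) * ((1 - r : ℝ) : ℂ) * (vl a v ^ ((-r : ℝ) : ℂ) * vl b (-v) ^ ((-s : ℝ) : ℂ))
        + (2 * Real.pi * I) * (s : ℂ) * (vl a v ^ ((1 - r : ℝ) : ℂ) * vl b (-v) ^ ((-(s + 1) : ℝ) : ℂ))) v := by
    intro v
    have d1 : HasDerivAt (fun v : ℝ => vl a v) (2 * Real.pi * I) v := by
      unfold vl
      have h0 := (((Complex.ofRealCLM.hasDerivAt (x := v)).const_mul (2 * Real.pi : ℂ)).mul_const I).const_add a
      simpa using! h0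
    have d2 : HasDerivAt (fun v : ℝ => vl b (-v)) (-(2 * Real.pi * I)) v := by
      unfold vl
      have h0 := (((Complex.ofRealCLM.hasDerivAt (x := v)).const_mul (2 * Real.pi : ℂ)).mul_const I).const_sub b
      have h1 : (fun v : ℝ => b + 2 * Real.pi * ((-v : ℝ) : ℂ) * I) = fun v : ℝ => b - 2 * Real.pi * Complex.ofRealCLM v * I := by
        funext v; simp; ring
      rw [h1]
      simpa using! h0
    have e1 : vl a v ∈ slitPlane := Or.inl (by rw [vl_re]; exact ha)
    have e2 : vl b (-v) ∈ slitPlane := Or.inl (by rw [vl_re]; exact hb)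
    have c1 := ((hasDerivAt_id (vl a v)).cpow_const (c := ((1 - r : ℝ) : ℂ)) e1).comp v d1
    have c2 := ((hasDerivAt_id (vl b (-v))).cpow_const (c := ((-s : ℝ) : ℂ)) e2).comp v d2
    have := c1.mul c2
    convert! this using 1
    have q1 : ((1 - r : ℝ) : ℂ) - 1 = ((-r : ℝ) : ℂ) := by push_cast; ring
    have q2 : ((-s : ℝ) : ℂ) - 1 = ((-(s + 1) : ℝ) : ℂ) := by push_cast; ring
    rw [q1, q2]
    simp only [id, Function.comp]
    push_cast
    ring
  have hz := integral_of_hasDerivAt_of_tendsto hder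
    ((i1.const_mul _).add (i2.const_mul _))
    (t.mono_left (by rw [cocompact_eq_atBot_atTop]; exact le_sup_left))
    (t.mono_left (by rw [cocompact_eq_atBot_atTop]; exact le_sup_right))
  rw [integral_add (i1.const_mul _) (i2.const_mul _), integral_const_mul, integral_const_mul, sub_zero] at hz
  have hsum : (a + b) * ∫ v : ℝ, vl a v ^ ((-r : ℝ) : ℂ) * vl b (-v) ^ ((-(s + 1) : ℝ) : ℂ)
      = (∫ v : ℝ, vl a v ^ ((1 - r : ℝ) : ℂ) * vl b (-v) ^ ((-(s + 1) : ℝ) : ℂ)) +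
        ∫ v : ℝ, vl a v ^ ((-r : ℝ) : ℂ) * vl b (-v) ^ ((-s : ℝ) : ℂ) := by
    rw [← integral_add i2 i1, ← integral_const_mul]
    congr 1
    funext v
    have h1 : vl a v ^ ((1 - r : ℝ) : ℂ) = vl a v * vl a v ^ ((-r : ℝ) : ℂ) := by
      have : ((1 - r : ℝ) : ℂ) = 1 + ((-r : ℝ) : ℂ) := by push_cast; ring
      rw [this, Complex.cpow_add _ _ (vl_ne ha v), Complex.cpow_one]
    have h2 : vl b (-v) ^ ((-s : ℝ) : ℂ) = vl b (-v) * vl b (-v) ^ ((-(s + 1) : ℝ) : ℂ) := by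
      have : ((-s : ℝ) : ℂ) = 1 + ((-(s + 1) : ℝ) : ℂ) := by push_cast; ring
      rw [this, Complex.cpow_add _ _ (vl_ne hb (-v)), Complex.cpow_one]
    have h3 : a + b = vl a v + vl b (-v) := by simp [vl]; ring
    rw [h1, h2, h3]
    ring
  have hpi : (2 * Real.pi * I : ℂ) ≠ 0 := by
    simp [Real.pi_ne_zero]
  set J1 := ∫ v : ℝ, vl a v ^ ((-r : ℝ) : ℂ) * vl b (-v) ^ ((-s : ℝ) : ℂ)
  set J2 := ∫ v : ℝ, vl a v ^ ((1 - r : ℝ) : ℂ) * vl b (-v) ^ ((-(s + 1) : ℝ) : ℂ)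
  have hz' : (2 * Real.pi * I : ℂ) * (((1 - r : ℝ) : ℂ) * J1 + s * J2) = 0 := by
    rw [← hz]; ring
  have hz2 := (mul_eq_zero.1 hz').resolve_left hpi
  rw [mul_assoc, hsum]
  push_cast at hz2 ⊢
  linear_combination hz2

/-- the one-sided gamma density -/
def gf (a : ℂ) (r : ℝ) : ℝ → ℂ :=
  indicator (Ioi 0) (fun x : ℝ => ((x ^ (r - 1) : ℝ) : ℂ) * cexp (-(a * x)))

lemma gf_int {a : ℂ} {r : ℝ} (ha : 0 < a.re) (hr : 0 < r) : Integrable (gf a r) := by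
  unfold gf
  rw [integrable_indicator_iff measurableSet_Ioi]
  exact gam_int hr ha

lemma gf_cont {a : ℂ} {r : ℝ} (hr : 1 < r) : Continuous (gf a r) := by
  have : gf a r = fun x : ℝ => (((max x 0) ^ (r - 1) : ℝ) : ℂ) * cexp (-(a * x)) := by
    funext x
    unfold gf
    by_cases hx : 0 < x
    · rw [indicator_of_mem (by exact hx), max_eq_left hx.le]
    · rw [indicator_of_notMem (by exact hx), max_eq_right (not_lt.1 hx), Real.zero_rpow (by linarith)]
      simp
  rw [this]
  have h1 : Continuous (fun x : ℝ => (max x 0) ^ (r - 1)) :=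
    (continuous_id.max continuous_const).rpow_const (fun x => Or.inr (by linarith))
  fun_prop

open FourierTransform in
lemma gf_fourier {a : ℂ} {r : ℝ} (ha : 0 < a.re) (hr : 0 < r) (v : ℝ) :
    𝓕 (gf a r) v = (Real.Gamma r : ℂ) * vl a v ^ ((-r : ℝ) : ℂ) := by
  rw [Real.fourier_real_eq_integral_exp_smul]
  have h := gam_val (c := vl a v) hr (by rw [vl_re]; exact ha)
  rw [Complex.ofReal_neg, ← h, ← integral_indicator measurableSet_Ioi]
  congr 1
  funext x
  unfold gf
  by_cases hx : x ∈ Ioi (0:ℝ)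
  · rw [indicator_of_mem hx, indicator_of_mem hx, smul_eq_mul, mul_left_comm, ← Complex.exp_add]
    congr 2
    unfold vl
    push_cast
    ring
  · rw [indicator_of_notMem hx, indicator_of_notMem hx, smul_zero]

open FourierTransform in
lemma J_val_aux {a b : ℂ} (ha : 0 < a.re) (hb : 0 < b.re) {r s : ℝ} (hr : 0 < r) (hs : 1 < s) :
    ∫ v : ℝ, vl a v ^ ((-r : ℝ) : ℂ) * vl b (-v) ^ ((-s : ℝ) : ℂ)
      = ((Real.Gamma (r + s - 1) / (Real.Gamma r * Real.Gamma s) : ℝ) : ℂ)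
        * (a + b) ^ ((1 - r - s : ℝ) : ℂ) := by
  have gs := Real.Gamma_pos_of_pos (by linarith : 0 < s)
  have gr := Real.Gamma_pos_of_pos hr
  have hinv : ∀ v, 𝓕⁻ (gf b s) v = (Real.Gamma s : ℂ) * vl b (-v) ^ ((-s : ℝ) : ℂ) := by
    intro v
    rw [Real.fourierInv_eq_fourier_neg, gf_fourier hb (by linarith)]
  have i0 : Integrable (fun v : ℝ => vl b v ^ ((-s : ℝ) : ℂ)) := by
    refine Integrable.mono' (vl_norm_int (p := s) hs hb) (vl_cpow_cont hb _).aestronglyMeasurable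
      (Eventually.of_forall fun v => ?_)
    rw [Complex.norm_cpow_real]
  have i1 : Integrable (𝓕 (gf b s)) := by
    have : 𝓕 (gf b s) = fun v => (Real.Gamma s : ℂ) * vl b v ^ ((-s : ℝ) : ℂ) :=
      funext fun v => gf_fourier hb (by linarith) v
    rw [this]
    exact i0.const_mul _
  have i2 : Integrable (𝓕⁻ (gf b s)) := by
    have : 𝓕⁻ (gf b s) = fun v => (Real.Gamma s : ℂ) * vl b (-v) ^ ((-s : ℝ) : ℂ) :=
      funext hinv
    rw [this]
    exact i0.comp_neg.const_mul _
  have hF : 𝓕 (𝓕⁻ (gf b s)) = gf b s :=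
    (gf_cont hs).fourier_fourierInv_eq (gf_int hb (by linarith)) i1
  have flip : ∫ v, 𝓕 (gf a r) v • (𝓕⁻ (gf b s)) v = ∫ x, gf a r x • 𝓕 (𝓕⁻ (gf b s)) x := by
    simpa using! (VectorFourier.integral_fourierIntegral_smul_eq_flip (L := innerₗ ℝ)
      Real.continuous_fourierChar continuous_inner (gf_int ha hr) i2)
  rw [hF] at flip
  have hl : ∫ v, 𝓕 (gf a r) v • (𝓕⁻ (gf b s)) v = (Real.Gamma r * Real.Gamma s : ℂ) *
      ∫ v : ℝ, vl a v ^ ((-r : ℝ) : ℂ) * vl b (-v) ^ ((-s : ℝ) : ℂ) := by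
    rw [← integral_const_mul]
    congr 1
    funext v
    rw [hinv, gf_fourier ha hr, smul_eq_mul]
    ring
  have hrr : ∫ x, gf a r x • gf b s x =
      (Real.Gamma (r + s - 1) : ℂ) * (a + b) ^ (-((r + s - 1 : ℝ) : ℂ)) := by
    rw [← gam_val (by linarith) (by simp; linarith), ← integral_indicator measurableSet_Ioi]
    congr 1
    funext x
    unfold gf
    by_cases hx : x ∈ Ioi (0:ℝ)
    · rw [indicator_of_mem hx, indicator_of_mem hx, indicator_of_mem hx, smul_eq_mul,
        mul_mul_mul_comm, ← Complex.exp_add, ← Complex.ofReal_mul, ← Real.rpow_add hx]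
      congr 1
      · have e0 : r - 1 + (s - 1) = r + s - 1 - 1 := by ring
        rw [e0]
      · congr 1; ring
    · rw [indicator_of_notMem hx, indicator_of_notMem hx, smul_zero]
      simp [indicator_of_notMem hx]
  rw [hl, hrr] at flip
  have e : (1 - r - s : ℝ) = -(r + s - 1) := by ring
  rw [e, Complex.ofReal_neg]
  have gr' : (Real.Gamma r : ℂ) ≠ 0 := by exact_mod_cast gr.ne'
  have gs' : (Real.Gamma s : ℂ) ≠ 0 := by exact_mod_cast gs.ne'
  push_cast at flip ⊢
  field_simp
  linear_combination flip

lemma J_val {a b : ℂ} (ha : 0 < a.re) (hb : 0 < b.re) {r s : ℝ} (hr : 0 < r) (hs : 0 < s)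
    (hrs : 1 < r + s) :
    ∫ v : ℝ, vl a v ^ ((-r : ℝ) : ℂ) * vl b (-v) ^ ((-s : ℝ) : ℂ)
      = ((Real.Gamma (r + s - 1) / (Real.Gamma r * Real.Gamma s) : ℝ) : ℂ)
        * (a + b) ^ ((1 - r - s : ℝ) : ℂ) := by
  have h1 := J_val_aux ha hb hr (by linarith : 1 < s + 1)
  have h2 := J_rec ha hb hrs
  rw [h1] at h2
  have gs := Real.Gamma_pos_of_pos hs
  have gr := Real.Gamma_pos_of_pos hr
  have gr' : (Real.Gamma r : ℂ) ≠ 0 := by exact_mod_cast gr.ne'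
  have gs' : (Real.Gamma s : ℂ) ≠ 0 := by exact_mod_cast gs.ne'
  have hs' : (s : ℂ) ≠ 0 := by exact_mod_cast hs.ne'
  have hq : ((r + s - 1 : ℝ) : ℂ) ≠ 0 := by
    have : r + s - 1 ≠ 0 := by linarith
    exact_mod_cast this
  have hab : a + b ≠ 0 := by
    intro h
    have := congrArg Complex.re h
    simp at this
    linarith
  have e1 : r + (s + 1) - 1 = (r + s - 1) + 1 := by ring
  have e2 : (a + b) ^ ((1 - r - s : ℝ) : ℂ) = (a + b) * (a + b) ^ ((1 - r - (s + 1) : ℝ) : ℂ) := by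
    have : ((1 - r - s : ℝ) : ℂ) = 1 + ((1 - r - (s + 1) : ℝ) : ℂ) := by push_cast; ring
    rw [this, Complex.cpow_add _ _ hab, Complex.cpow_one]
  rw [e1, Real.Gamma_add_one (by linarith), Real.Gamma_add_one hs.ne'] at h2
  rw [e2]
  refine mul_left_cancel₀ hq ?_
  rw [← h2]
  push_cast
  field_simp

/-- the `x_n`-integral -/
lemma J_line {a b : ℂ} (ha : 0 < a.re) (hb : 0 < b.re) {r s : ℝ} (hr : 0 < r) (hs : 0 < s)
    (hrs : 1 < r + s) :
    ∫ x : ℝ, (a + (1 / 2 : ℝ) * x * I) ^ (-(r : ℂ)) * (b - (1 / 2 : ℝ) * x * I) ^ (-(s : ℂ))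
      = ((4 * Real.pi * Real.Gamma (r + s - 1) / (Real.Gamma r * Real.Gamma s) : ℝ) : ℂ)
        * (a + b) ^ (-((r + s - 1 : ℝ) : ℂ)) := by
  have h := Measure.integral_comp_mul_left
    (fun x : ℝ => (a + (1 / 2 : ℝ) * x * I) ^ (-(r : ℂ)) * (b - (1 / 2 : ℝ) * x * I) ^ (-(s : ℂ)))
    (4 * Real.pi)
  have h1 : ∀ v : ℝ, (a + (1 / 2 : ℝ) * ((4 * Real.pi * v : ℝ) : ℂ) * I) ^ (-(r : ℂ)) *
     (b - (1 / 2 : ℝ) * ((4 * Real.pi * v : ℝ) : ℂ) * I) ^ (-(s : ℂ)) =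
     vl a v ^ ((-r : ℝ) : ℂ) * vl b (-v) ^ ((-s : ℝ) : ℂ) := by
    intro v
    unfold vl
    push_cast
    congr 2 <;> ring
  simp_rw [h1] at h
  rw [J_val ha hb hr hs hrs, abs_of_pos (by positivity)] at h
  have hpi : (Real.pi : ℂ) ≠ 0 := by exact_mod_cast Real.pi_ne_zero
  have e : (1 - r - s : ℝ) = -(r + s - 1) := by ring
  rw [e, Complex.ofReal_neg, Complex.real_smul] at h
  have h4 : ∀ X : ℂ, X = (4 * Real.pi : ℂ) * ((((4 * Real.pi)⁻¹ : ℝ) : ℂ) * X) := by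
    intro X; push_cast; field_simp
  rw [h4 (∫ x : ℝ, _), ← h]
  push_cast
  ring

/-- the quadratic exponent in one complex variable -/
def gq (α β w : ℂ) : ℂ := (1 / 4) * ((α - conj w) ^ 2 + (w - conj β) ^ 2) + ((w.im ^ 2 : ℝ) : ℂ)

lemma gq_cont (α β : ℂ) : Continuous (gq α β) := by
  unfold gq
  have : Continuous (fun w : ℂ => conj w) := Complex.continuous_conj
  fun_prop

lemma gq_re (α β w : ℂ) : (gq α β w).re =
    (1 / 4) * (Complex.normSq (α - w) + Complex.normSq (β - w)) - (1 / 2) * (α.im ^ 2 + β.im ^ 2) := by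
  simp [gq, Complex.normSq_apply, pow_two]
  ring

lemma gq_im (m w : ℂ) : (gq m m w).im = 0 := by
  simp [gq, pow_two]
  ring

lemma gq_split (l : ℝ) (α β : ℂ) (x y : ℝ) :
    cexp (-(l * gq α β ⟨x, y⟩)) =
      cexp (-(l / 2 : ℂ) * x ^ 2 + (l * (α + conj β) / 2) * x + (-(l * (α ^ 2 + conj β ^ 2) / 4))) *
      cexp (-(l / 2 : ℂ) * y ^ 2 + (-(I * l * (α - conj β) / 2)) * y + 0) := by
  rw [← Complex.exp_add]
  congr 1
  have h1 : (⟨x, y⟩ : ℂ) = x + y * I := Complex.mk_eq_add_mul_I x y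
  have h2 : conj (⟨x, y⟩ : ℂ) = x - y * I := by rw [h1]; simp; ring
  unfold gq
  rw [h2, h1]
  simp only [Complex.add_im, Complex.ofReal_im, Complex.mul_im, Complex.ofReal_re, Complex.I_im, Complex.I_re]
  push_cast
  ring_nf
  simp only [Complex.I_sq]
  ring

lemma gq_int {l : ℝ} (hl : 0 < l) (α β : ℂ) : Integrable (fun w : ℂ => cexp (-(l * gq α β w))) := by
  have h := Complex.volume_preserving_equiv_real_prod.symm.integrable_comp_emb
    Complex.measurableEquivRealProd.symm.measurableEmbedding (g := fun w : ℂ => cexp (-(l * gq α β w)))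
  rw [← h]
  have hre : 0 < (l / 2 : ℂ).re := by simpa using hl
  refine ((integrable_cexp_quadratic hre (l * (α + conj β) / 2) (-(l * (α ^ 2 + conj β ^ 2) / 4))).mul_prod
    (integrable_cexp_quadratic hre (-(I * l * (α - conj β) / 2)) 0)).congr ?_
  exact Eventually.of_forall fun p => (gq_split l α β p.1 p.2).symm

lemma gq_val {l : ℝ} (hl : 0 < l) (α β : ℂ) : ∫ w : ℂ, cexp (-(l * gq α β w)) =
    (2 * Real.pi / l : ℂ) * cexp (-(l * ((1 / 4) * (α - conj β) ^ 2))) := by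
  have h := Complex.volume_preserving_equiv_real_prod.symm.integral_comp
    Complex.measurableEquivRealProd.symm.measurableEmbedding (fun w : ℂ => cexp (-(l * gq α β w)))
  rw [← h]
  have hre : (-(l / 2 : ℂ)).re < 0 := by simpa using hl
  have h2 : ∀ p : ℝ × ℝ, cexp (-(l * gq α β (Complex.measurableEquivRealProd.symm p))) = _ :=
    fun p => gq_split l α β p.1 p.2
  simp_rw [h2]
  have h3 := integral_prod_mul (μ := (volume : Measure ℝ)) (ν := (volume : Measure ℝ))
    (fun x : ℝ => cexp (-(l / 2 : ℂ) * x ^ 2 + (l * (α + conj β) / 2) * x + (-(l * (α ^ 2 + conj β ^ 2) / 4))))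
    (fun y : ℝ => cexp (-(l / 2 : ℂ) * y ^ 2 + (-(I * l * (α - conj β) / 2)) * y + 0))
  rw [← Measure.volume_eq_prod] at h3
  rw [h3, integral_cexp_quadratic hre, integral_cexp_quadratic hre]
  have hl' : (l : ℂ) ≠ 0 := by exact_mod_cast hl.ne'
  have hb : (Real.pi / -(-(l / 2 : ℂ))) = 2 * Real.pi / l := by field_simp
  have hb0 : (2 * Real.pi / l : ℂ) ≠ 0 := by
    have : (Real.pi : ℂ) ≠ 0 := by exact_mod_cast Real.pi_ne_zero
    exact div_ne_zero (mul_ne_zero two_ne_zero this) hl'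
  rw [hb, mul_mul_mul_comm, ← Complex.cpow_add _ _ hb0, ← Complex.exp_add]
  norm_num
  left
  congr 1
  field_simp
  ring_nf
  simp only [Complex.I_sq]
  ring

/-- constant in the exponent of the norm -/
def gC (α β : ℂ) : ℝ := Complex.normSq (α - β) / 8 - (1 / 2) * (α.im ^ 2 + β.im ^ 2)

lemma gq_norm_val {l : ℝ} (hl : 0 < l) (α β : ℂ) : ∫ w : ℂ, ‖cexp (-(l * gq α β w))‖ =
    (2 * Real.pi / l) * Real.exp (-(l * gC α β)) := by
  have h := gq_val hl ((α + β) / 2) ((α + β) / 2)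
  have h1 : ∀ w, ((‖cexp (-(l * gq α β w))‖ : ℝ) : ℂ) =
     cexp (-(l * gq ((α + β) / 2) ((α + β) / 2) w)) * (Real.exp (-(l * (gC α β + ((α + β) / 2).im ^ 2))) : ℂ) := by
    intro w
    have him : (gq ((α + β) / 2) ((α + β) / 2) w).im = 0 := gq_im _ w
    have hcast : gq ((α + β) / 2) ((α + β) / 2) w = ((gq ((α + β) / 2) ((α + β) / 2) w).re : ℂ) := by
      apply Complex.ext <;> simp [him]
    rw [hcast, Complex.norm_exp]
    have : (-(l * gq α β w)).re = -(l * (gq ((α + β) / 2) ((α + β) / 2) w).re) + -(l * (gC α β + ((α + β) / 2).im ^ 2)) := by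
      simp only [Complex.neg_re, Complex.re_ofReal_mul, gq_re, gC]
      simp [Complex.normSq_apply]
      ring
    rw [this, Real.exp_add]
    push_cast
    ring
  have h2 : ((∫ w : ℂ, ‖cexp (-(l * gq α β w))‖ : ℝ) : ℂ) = (((2 * Real.pi / l) * Real.exp (-(l * gC α β)) : ℝ) : ℂ) := by
    rw [← integral_complex_ofReal]
    simp_rw [h1]
    rw [integral_mul_const, h]
    push_cast
    rw [mul_assoc, ← Complex.exp_add]
    congr 2
    have : (α + β) / 2 - conj ((α + β) / 2) = (2 * ((α + β) / 2).im : ℝ) * I := Complex.sub_conj _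
    rw [this, mul_pow, Complex.I_sq]
    push_cast
    ring
  exact_mod_cast h2

/-- the measure on `λ` resp. `η` -/
def mI : Measure ℝ := volume.restrict (Ioi 0)

instance : SFinite mI := by unfold mI; infer_instance

/-- the measure on `(w, η)` -/
def mW (n : ℕ) : Measure ((Fin n → ℂ) × ℝ) := (volume : Measure (Fin n → ℂ)).prod mI

instance (n : ℕ) : SFinite (mW n) := by unfold mW; infer_instance

def Qf {n : ℕ} (α β : Fin n → ℂ) (d : ℂ) (w : Fin n → ℂ) : ℂ := d + ∑ k, gq (α k) (β k) (w k)

lemma Qf_cont {n : ℕ} (α β : Fin n → ℂ) (d : ℂ) : Continuous (Qf α β d) := by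
  unfold Qf
  refine continuous_const.add (continuous_finsetSum _ fun k _ => ?_)
  exact (gq_cont _ _).comp (continuous_apply k)

lemma Qf_re {n : ℕ} (α β : Fin n → ℂ) (d : ℂ)
    (hM : 0 < d.re - ∑ k, (1 / 2) * ((α k).im ^ 2 + (β k).im ^ 2)) (w : Fin n → ℂ) :
    0 < (Qf α β d w).re := by
  unfold Qf
  rw [Complex.add_re, Complex.re_sum]
  simp_rw [gq_re]
  rw [Finset.sum_sub_distrib]
  have : 0 ≤ ∑ k, (1 / 4) * (Complex.normSq (α k - w k) + Complex.normSq (β k - w k)) :=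
    Finset.sum_nonneg fun k _ => mul_nonneg (by norm_num)
      (add_nonneg (Complex.normSq_nonneg _) (Complex.normSq_nonneg _))
  linarith

/-- the integrand in `(λ, (w, η))` -/
def HH {n : ℕ} (α β : Fin n → ℂ) (d : ℂ) (σ t : ℝ) (q : ℝ × ((Fin n → ℂ) × ℝ)) : ℂ :=
  ((q.1 ^ (σ - 1) : ℝ) : ℂ) * cexp (-(q.1 * d)) *
    ((∏ k, cexp (-(q.1 * gq (α k) (β k) (q.2.1 k)))) *
     (((q.2.2 ^ ((t + 1) - 1) : ℝ) : ℂ) * cexp (-(q.1 * q.2.2))))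

lemma HH_eq {n : ℕ} (α β : Fin n → ℂ) (d : ℂ) (σ t l : ℝ) (w : Fin n → ℂ) (η : ℝ) :
    HH α β d σ t (l, (w, η)) = ((η ^ t : ℝ) : ℂ) *
      (((l ^ (σ - 1) : ℝ) : ℂ) * cexp (-((η + Qf α β d w) * l))) := by
  unfold HH Qf
  simp only
  rw [← Complex.exp_sum, add_sub_cancel_right]
  have : cexp (-((η + (d + ∑ k, gq (α k) (β k) (w k))) * l)) =
      cexp (-(l * d)) * (cexp (∑ k, -(l * gq (α k) (β k) (w k))) * cexp (-(l * η))) := by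
    rw [← Complex.exp_add, ← Complex.exp_add]
    congr 1
    rw [Finset.sum_neg_distrib, ← Finset.mul_sum]
    ring
  rw [this]
  ring

lemma HH_meas {n : ℕ} (α β : Fin n → ℂ) (d : ℂ) (σ t : ℝ) : Measurable (HH α β d σ t) := by
  have h1 : Measurable (fun x : ℝ => ((x ^ (σ - 1) : ℝ) : ℂ)) :=
    Complex.measurable_ofReal.comp (measurable_id.pow_const _)
  have h2 : Measurable (fun x : ℝ => ((x ^ (t + 1 - 1) : ℝ) : ℂ)) :=
    Complex.measurable_ofReal.comp (measurable_id.pow_const _)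
  have h3 : ∀ k, Measurable (gq (α k) (β k)) := fun k => (gq_cont _ _).measurable
  unfold HH
  refine Measurable.mul ((h1.comp measurable_fst).mul (by fun_prop)) (Measurable.mul ?_ ?_)
  · refine Finset.measurable_fun_prod _ fun k _ => ?_
    have h4 : Measurable (fun q : ℝ × ((Fin n → ℂ) × ℝ) => gq (α k) (β k) (q.2.1 k)) :=
      (h3 k).comp (by fun_prop)
    fun_prop
  · exact (h2.comp (by fun_prop)).mul (by fun_prop)

lemma prodG_int {n : ℕ} (α β : Fin n → ℂ) {l : ℝ} (hl : 0 < l) :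
    Integrable (fun w : Fin n → ℂ => ∏ k, cexp (-(l * gq (α k) (β k) (w k)))) := by
  rw [volume_pi]
  exact Integrable.fintype_prod (f := fun k (w : ℂ) => cexp (-(l * gq (α k) (β k) w)))
    fun k => gq_int hl _ _

lemma HH_int_fix {n : ℕ} (α β : Fin n → ℂ) (d : ℂ) {σ t : ℝ} (ht : -1 < t) {l : ℝ} (hl : 0 < l) :
    Integrable (fun y => HH α β d σ t (l, y)) (mW n) := by
  have h2 : Integrable (fun x : ℝ => ((x ^ ((t + 1) - 1) : ℝ) : ℂ) * cexp (-((l : ℂ) * x))) mI :=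
    gam_int (a := t + 1) (c := (l : ℂ)) (by linarith) (by simpa using hl)
  exact ((prodG_int α β hl).mul_prod h2).const_mul (((l ^ (σ - 1) : ℝ) : ℂ) * cexp (-(l * d)))

lemma HH_norm_val {n : ℕ} (α β : Fin n → ℂ) (d : ℂ) {σ t : ℝ} (ht : -1 < t) {l : ℝ} (hl : 0 < l) :
    ∫ y, ‖HH α β d σ t (l, y)‖ ∂(mW n) =
      ((2 * Real.pi) ^ n * Real.Gamma (t + 1)) *
       (l ^ ((σ - t - 1 - n) - 1) * Real.exp (-((d.re + ∑ k, gC (α k) (β k)) * l))) := by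
  have h0 : ∀ y, ‖HH α β d σ t (l, y)‖ = ‖((l ^ (σ - 1) : ℝ) : ℂ) * cexp (-(l * d))‖ *
      (‖∏ k, cexp (-(l * gq (α k) (β k) (y.1 k)))‖ *
        ‖((y.2 ^ ((t + 1) - 1) : ℝ) : ℂ) * cexp (-(l * y.2))‖) := by
    intro y
    unfold HH
    rw [norm_mul, norm_mul (∏ k, _)]
  simp_rw [h0]
  unfold mW
  rw [integral_const_mul, integral_prod_mul (fun w : Fin n → ℂ => ‖∏ k, cexp (-(l * gq (α k) (β k) (w k)))‖)
    (fun x : ℝ => ‖((x ^ ((t + 1) - 1) : ℝ) : ℂ) * cexp (-(l * x))‖)]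
  have h1 : ∫ x, ‖((x ^ ((t + 1) - 1) : ℝ) : ℂ) * cexp (-(l * x))‖ ∂mI = (1 / l) ^ (t + 1) * Real.Gamma (t + 1) := by
    rw [← Real.integral_rpow_mul_exp_neg_mul_Ioi (by linarith) hl]
    unfold mI
    refine setIntegral_congr_fun measurableSet_Ioi fun x hx => ?_
    have := gam_norm (t + 1) (l : ℂ) hx
    simpa using this
  have h2 : ∫ w : Fin n → ℂ, ‖∏ k, cexp (-(l * gq (α k) (β k) (w k)))‖ =
      ∏ k, ((2 * Real.pi / l) * Real.exp (-(l * gC (α k) (β k)))) := by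
    simp_rw [norm_prod]
    rw [integral_fintype_prod_volume_eq_prod (fun k (w : ℂ) => ‖cexp (-(l * gq (α k) (β k) w))‖)]
    simp_rw [gq_norm_val hl]
  rw [h1, h2, Finset.prod_mul_distrib, ← Real.exp_sum, Finset.prod_const, Finset.card_univ,
    Fintype.card_fin, norm_mul, Complex.norm_real, Complex.norm_exp, Real.norm_of_nonneg (by positivity)]
  have e1 : Real.exp (-((d.re + ∑ k, gC (α k) (β k)) * l)) =
      Real.exp (-(l * d)).re * Real.exp (∑ k, -(l * gC (α k) (β k))) := by
    rw [← Real.exp_add]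
    congr 1
    rw [Finset.sum_neg_distrib, ← Finset.mul_sum]
    simp
    ring
  have e2 : l ^ ((σ - t - 1 - n) - 1) = l ^ (σ - 1) * (1 / l) ^ (t + 1) * (l⁻¹) ^ n := by
    rw [one_div, Real.inv_rpow hl.le, ← Real.rpow_neg hl.le, inv_pow, ← Real.rpow_natCast, ← Real.rpow_neg hl.le,
      ← Real.rpow_add hl, ← Real.rpow_add hl]
    congr 1; ring
  rw [e1, e2, div_eq_mul_inv (2 * Real.pi) l, mul_pow]
  ring

lemma HH_val {n : ℕ} (α β : Fin n → ℂ) (d : ℂ) {σ t : ℝ} (ht : -1 < t) {l : ℝ} (hl : 0 < l) :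
    ∫ y, HH α β d σ t (l, y) ∂(mW n) =
      (((2 * Real.pi) ^ n * Real.Gamma (t + 1) : ℝ) : ℂ) *
       (((l ^ ((σ - t - 1 - n) - 1) : ℝ) : ℂ) *
        cexp (-((d + ∑ k, (1 / 4) * (α k - conj (β k)) ^ 2) * l))) := by
  have h0 : ∀ y, HH α β d σ t (l, y) = ((l ^ (σ - 1) : ℝ) : ℂ) * cexp (-(l * d)) *
      ((∏ k, cexp (-(l * gq (α k) (β k) (y.1 k)))) *
        (((y.2 ^ ((t + 1) - 1) : ℝ) : ℂ) * cexp (-(l * y.2)))) := fun y => rfl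
  simp_rw [h0]
  unfold mW
  rw [integral_const_mul, integral_prod_mul (fun w : Fin n → ℂ => ∏ k, cexp (-(l * gq (α k) (β k) (w k))))
    (fun x : ℝ => ((x ^ ((t + 1) - 1) : ℝ) : ℂ) * cexp (-(l * x)))]
  have h1 : ∫ x, ((x ^ ((t + 1) - 1) : ℝ) : ℂ) * cexp (-(l * x)) ∂mI =
      (Real.Gamma (t + 1) : ℂ) * ((l ^ (-(t + 1)) : ℝ) : ℂ) := by
    unfold mI
    rw [gam_val (by linarith) (by simpa using hl), Complex.ofReal_cpow hl.le]
    push_cast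
    rfl
  have h2 : ∫ w : Fin n → ℂ, ∏ k, cexp (-(l * gq (α k) (β k) (w k))) =
      ∏ k, ((2 * Real.pi / l : ℂ) * cexp (-(l * ((1 / 4) * (α k - conj (β k)) ^ 2)))) := by
    rw [integral_fintype_prod_volume_eq_prod (fun k (w : ℂ) => cexp (-(l * gq (α k) (β k) w)))]
    simp_rw [gq_val hl]
  rw [h1, h2, Finset.prod_mul_distrib, ← Complex.exp_sum, Finset.prod_const, Finset.card_univ,
    Fintype.card_fin]
  have e1 : cexp (-((d + ∑ k, (1 / 4) * (α k - conj (β k)) ^ 2) * l)) =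
      cexp (-(l * d)) * cexp (∑ k, -(l * ((1 / 4) * (α k - conj (β k)) ^ 2))) := by
    rw [← Complex.exp_add]
    congr 1
    rw [Finset.sum_neg_distrib,
      ← Finset.mul_sum Finset.univ (fun k => (1 / 4 : ℂ) * (α k - conj (β k)) ^ 2) (l : ℂ)]
    generalize (∑ k, (1 / 4 : ℂ) * (α k - conj (β k)) ^ 2) = S
    ring
  have e2 : l ^ ((σ - t - 1 - n) - 1) = l ^ (σ - 1) * l ^ (-(t + 1)) * (l⁻¹) ^ n := by
    rw [inv_pow, ← Real.rpow_natCast, ← Real.rpow_neg hl.le,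
      ← Real.rpow_add hl, ← Real.rpow_add hl]
    congr 1; ring
  rw [e1, e2, div_eq_mul_inv (2 * Real.pi : ℂ) l, mul_pow]
  push_cast
  ring

lemma HH_int {n : ℕ} (α β : Fin n → ℂ) (d : ℂ) {σ t : ℝ} (ht : -1 < t) (hσ : (n : ℝ) < σ - t - 1)
    (hM : 0 < d.re - ∑ k, (1 / 2) * ((α k).im ^ 2 + (β k).im ^ 2)) :
    Integrable (HH α β d σ t) (mI.prod (mW n)) := by
  rw [integrable_prod_iff (HH_meas α β d σ t).aestronglyMeasurable]
  have hpos : 0 < d.re + ∑ k, gC (α k) (β k) := by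
    unfold gC
    rw [Finset.sum_sub_distrib]
    have : 0 ≤ ∑ k, Complex.normSq (α k - β k) / 8 :=
      Finset.sum_nonneg fun k _ => div_nonneg (Complex.normSq_nonneg _) (by norm_num)
    linarith
  constructor
  · unfold mI
    filter_upwards [ae_restrict_mem measurableSet_Ioi] with l hl
    exact HH_int_fix α β d ht hl
  · have h := (gam_real_int (a := σ - t - 1 - n) (by linarith) hpos).const_mul
      ((2 * Real.pi) ^ n * Real.Gamma (t + 1))
    refine Integrable.congr h ?_
    filter_upwards [ae_restrict_mem measurableSet_Ioi] with l hl
    exact (HH_norm_val α β d ht hl).symm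

lemma HH_inner {n : ℕ} (α β : Fin n → ℂ) (d : ℂ) {σ t : ℝ} (hσ : 0 < σ)
    (hM : 0 < d.re - ∑ k, (1 / 2) * ((α k).im ^ 2 + (β k).im ^ 2)) :
    (fun y => ∫ l, HH α β d σ t (l, y) ∂mI) =ᵐ[mW n] fun y => (Real.Gamma σ : ℂ) *
      (((y.2 ^ t : ℝ) : ℂ) * (y.2 + Qf α β d y.1) ^ (-(σ : ℂ))) := by
  have hae : ∀ᵐ y ∂(mW n), 0 < y.2 := by
    have h1 : ∀ᵐ x ∂mI, 0 < x := ae_restrict_mem measurableSet_Ioi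
    exact Measure.quasiMeasurePreserving_snd.ae h1
  filter_upwards [hae] with y hy
  obtain ⟨w, η⟩ := y
  simp_rw [HH_eq]
  rw [integral_const_mul]
  unfold mI
  have hq := Qf_re α β d hM w
  rw [gam_val hσ (by simp at hy ⊢; linarith)]
  ring

lemma K_int {n : ℕ} (α β : Fin n → ℂ) (d : ℂ) {σ t : ℝ} (ht : -1 < t) (hσ : (n : ℝ) < σ - t - 1)
    (hM : 0 < d.re - ∑ k, (1 / 2) * ((α k).im ^ 2 + (β k).im ^ 2)) :
    Integrable (fun y : (Fin n → ℂ) × ℝ =>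
      ((y.2 ^ t : ℝ) : ℂ) * (y.2 + Qf α β d y.1) ^ (-(σ : ℂ))) (mW n) := by
  have hn : (0 : ℝ) ≤ n := n.cast_nonneg
  have hσ0 : 0 < σ := by linarith
  have h := (HH_int α β d ht hσ hM).integral_prod_right
  have h2 := h.congr (HH_inner α β d hσ0 hM)
  have h3 := h2.const_mul ((Real.Gamma σ : ℂ)⁻¹)
  have g' : (Real.Gamma σ : ℂ) ≠ 0 := by exact_mod_cast (Real.Gamma_pos_of_pos hσ0).ne'
  simpa [inv_mul_cancel_left₀ g'] using h3

lemma K_val {n : ℕ} (α β : Fin n → ℂ) (d : ℂ) {σ t : ℝ} (ht : -1 < t) (hσ : (n : ℝ) < σ - t - 1)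
    (hM : 0 < d.re - ∑ k, (1 / 2) * ((α k).im ^ 2 + (β k).im ^ 2)) :
    ∫ y, ((y.2 ^ t : ℝ) : ℂ) * (y.2 + Qf α β d y.1) ^ (-(σ : ℂ)) ∂(mW n) =
      (((2 * Real.pi) ^ n * Real.Gamma (t + 1) * Real.Gamma (σ - t - 1 - n) / Real.Gamma σ : ℝ) : ℂ) *
        (d + ∑ k, (1 / 4) * (α k - conj (β k)) ^ 2) ^ (-((σ - t - 1 - n : ℝ) : ℂ)) := by
  have hn : (0 : ℝ) ≤ n := n.cast_nonneg
  have hσ0 : 0 < σ := by linarith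
  have g' : (Real.Gamma σ : ℂ) ≠ 0 := by exact_mod_cast (Real.Gamma_pos_of_pos hσ0).ne'
  have h := integral_integral_swap (f := fun l y => HH α β d σ t (l, y)) (HH_int α β d ht hσ hM)
  rw [integral_congr_ae (HH_inner α β d hσ0 hM), integral_const_mul] at h
  have h1 : ∫ l, ∫ y, HH α β d σ t (l, y) ∂(mW n) ∂mI =
      ∫ l, (((2 * Real.pi) ^ n * Real.Gamma (t + 1) : ℝ) : ℂ) *
       (((l ^ ((σ - t - 1 - n) - 1) : ℝ) : ℂ) *
        cexp (-((d + ∑ k, (1 / 4) * (α k - conj (β k)) ^ 2) * l))) ∂mI := by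
    unfold mI
    exact setIntegral_congr_fun measurableSet_Ioi fun l hl => HH_val α β d ht hl
  have hre : 0 < (d + ∑ k, (1 / 4) * (α k - conj (β k)) ^ 2).re := by
    have hq := Qf_re α β d hM β
    have : Qf α β d β = d + ∑ k, (1 / 4) * (α k - conj (β k)) ^ 2 := by
      unfold Qf
      congr 1
      refine Finset.sum_congr rfl fun k _ => ?_
      have h5 : β k - conj (β k) = (2 * (β k).im : ℝ) * I := Complex.sub_conj _
      rw [gq, h5, mul_pow, Complex.I_sq]
      push_cast
      ring
    rwa [← this]
  rw [h1, integral_const_mul] at h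
  unfold mI at h
  rw [gam_val (by linarith) hre] at h
  refine mul_left_cancel₀ g' ?_
  rw [← h]
  push_cast
  field_simp

/-- sum of squares of imaginary parts -/
def sIm {n : ℕ} (w : Fin n → ℂ) : ℝ := ∑ k, (w k).im ^ 2

lemma sIm_cont {n : ℕ} : Continuous (sIm (n := n)) := by
  unfold sIm
  refine continuous_finsetSum _ fun k _ => ?_
  exact (Complex.continuous_im.comp (continuous_apply k)).pow 2

/-- the coordinates `((w, η), x)` -/
def Phi (n : ℕ) (p : ((Fin n → ℂ) × ℝ) × ℝ) : Fin (n + 1) → ℂ :=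
  Fin.snoc (α := fun _ => ℂ) p.1.1 ⟨p.2, p.1.2 + sIm p.1.1⟩

lemma Phi_castSucc (n : ℕ) (p : ((Fin n → ℂ) × ℝ) × ℝ) (k : Fin n) :
    Phi n p k.castSucc = p.1.1 k := by
  simp [Phi]

lemma Phi_last (n : ℕ) (p : ((Fin n → ℂ) × ℝ) × ℝ) :
    Phi n p (Fin.last n) = ⟨p.2, p.1.2 + sIm p.1.1⟩ := by
  simp [Phi]

lemma Phi_mp (n : ℕ) : MeasurePreserving (Phi n) volume volume := by
  have h1 : MeasurePreserving (fun p : (Fin n → ℂ) × ℝ => (p.1, p.2 + sIm p.1))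
      (volume.prod volume) (volume.prod volume) := by
    refine MeasurePreserving.skew_product (g := fun w η => η + sIm w) (MeasurePreserving.id _) ?_ ?_
    · have : Continuous (fun p : (Fin n → ℂ) × ℝ => p.2 + sIm p.1) :=
        continuous_snd.add (sIm_cont.comp continuous_fst)
      exact this.measurable
    · exact Eventually.of_forall fun w => (measurePreserving_add_right volume (sIm w)).map_eq
  have h2 := h1.prod (MeasurePreserving.id (volume : Measure ℝ))
  have h3 := measurePreserving_prodAssoc (volume : Measure (Fin n → ℂ)) (volume : Measure ℝ)
    (volume : Measure ℝ)
  have h4 := (Measure.measurePreserving_swap (μ := (volume : Measure (Fin n → ℂ)))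
    (ν := (volume : Measure ℝ).prod (volume : Measure ℝ)))
  have h5 : MeasurePreserving (fun p : ℝ × ℝ => Complex.measurableEquivRealProd.symm p.swap)
      (volume.prod volume) volume :=
    Complex.volume_preserving_equiv_real_prod.symm.comp (Measure.measurePreserving_swap)
  have h6 := h5.prod (MeasurePreserving.id (volume : Measure (Fin n → ℂ)))
  have h7 := (volume_preserving_piFinSuccAbove (fun _ : Fin (n + 1) => ℂ) (Fin.last n)).symm
  have h := h7.comp (h6.comp (h4.comp (h3.comp h2)))
  suffices e : Phi n = (MeasurableEquiv.piFinSuccAbove (fun _ : Fin (n + 1) => ℂ) (Fin.last n)).symm ∘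
      Prod.map (fun p : ℝ × ℝ => Complex.measurableEquivRealProd.symm p.swap) id ∘
        Prod.swap ∘ MeasurableEquiv.prodAssoc ∘
          Prod.map (fun p : (Fin n → ℂ) × ℝ => (p.1, p.2 + sIm p.1)) id by
    rw [e]; exact h
  funext p
  refine funext fun j => ?_
  refine Fin.lastCases ?_ (fun k => ?_) j
  · rw [Phi_last]
    simp [MeasurableEquiv.piFinSuccAbove, Fin.insertNthEquiv, Complex.measurableEquivRealProd, MeasurableEquiv.prodAssoc]
    rfl
  · rw [Phi_castSucc]
    simp [MeasurableEquiv.piFinSuccAbove, Fin.insertNthEquiv, Complex.measurableEquivRealProd, MeasurableEquiv.prodAssoc]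

lemma Phi_rho (n : ℕ) (p : ((Fin n → ℂ) × ℝ) × ℝ) : rho n (Phi n p) = p.1.2 := by
  simp [rho, Phi_castSucc, Phi_last, sIm]

lemma mem_TB_iff (n : ℕ) (z : Fin (n + 1) → ℂ) : z ∈ TB n ↔ 0 < rho n z := by
  simp [TB, rho]

lemma rho_cont (n : ℕ) : Continuous (rho n) := by
  unfold rho
  fun_prop

lemma Phi_mp_TB (n : ℕ) :
    MeasurePreserving (Phi n) ((mW n).prod volume) (volume.restrict (TB n)) := by
  have hT : MeasurableSet (TB n) := by
    have : TB n = rho n ⁻¹' (Ioi 0) := by ext z; rw [mem_TB_iff]; rfl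
    rw [this]
    exact (rho_cont n).measurable measurableSet_Ioi
  have h := (Phi_mp n).restrict_preimage hT
  have hs : Phi n ⁻¹' TB n = (univ ×ˢ Ioi 0) ×ˢ univ := by
    ext p
    simp [mem_TB_iff, Phi_rho]
  have hm : (mW n).prod volume = (volume : Measure (((Fin n → ℂ) × ℝ) × ℝ)).restrict
      (Phi n ⁻¹' TB n) := by
    rw [hs, Measure.volume_eq_prod, ← Measure.prod_restrict, Measure.volume_eq_prod,
      ← Measure.prod_restrict, Measure.restrict_univ, Measure.restrict_univ]
    rfl
  rw [hm]
  exact h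

/-- `ρ(z,w)` without the part depending on `x = Re w_n` -/
def Az (n : ℕ) (z : Fin (n + 1) → ℂ) (y : (Fin n → ℂ) × ℝ) : ℂ :=
  (∑ k : Fin n, (1 / 4) * (z k.castSucc - conj (y.1 k)) ^ 2) - I / 2 * z (Fin.last n)
    + (((y.2 + sIm y.1) / 2 : ℝ) : ℂ)

lemma Az_cont (n : ℕ) (z : Fin (n + 1) → ℂ) : Continuous (Az n z) := by
  unfold Az
  have h : Continuous (fun w : ℂ => conj w) := Complex.continuous_conj
  have h2 := sIm_cont (n := n)
  fun_prop

lemma rho2_Phi (n : ℕ) (z : Fin (n + 1) → ℂ) (p : ((Fin n → ℂ) × ℝ) × ℝ) :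
    rho2 n z (Phi n p) = Az n z p.1 + (1 / 2 : ℝ) * p.2 * I := by
  have h1 : conj (⟨p.2, p.1.2 + sIm p.1.1⟩ : ℂ) = p.2 - ((p.1.2 + sIm p.1.1 : ℝ) : ℂ) * I := by
    apply Complex.ext <;> simp
  unfold rho2 Az
  simp only [Phi_castSucc, Phi_last]
  rw [h1, ← Finset.mul_sum]
  generalize (∑ k : Fin n, (z k.castSucc - conj (p.1.1 k)) ^ 2) = S
  push_cast
  ring_nf
  simp only [Complex.I_sq]
  ring

lemma rho2_symm (n : ℕ) (z w : Fin (n + 1) → ℂ) : rho2 n w z = conj (rho2 n z w) := by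
  unfold rho2
  simp only [map_mul, map_sub, map_sum, map_pow, Complex.conj_conj, Complex.conj_I, map_ofNat,
    map_div₀, map_one]
  have : ∀ k : Fin n, (w k.castSucc - conj (z k.castSucc)) ^ 2 =
    (conj (z k.castSucc) - w k.castSucc) ^ 2 := fun k => by ring
  simp_rw [this]
  ring

lemma rho2_Phi' (n : ℕ) (u : Fin (n + 1) → ℂ) (p : ((Fin n → ℂ) × ℝ) × ℝ) :
    rho2 n (Phi n p) u = conj (Az n u p.1) - (1 / 2 : ℝ) * p.2 * I := by
  rw [rho2_symm, rho2_Phi]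
  simp only [map_add, map_mul, Complex.conj_ofReal, Complex.conj_I]
  ring

lemma Az_add (n : ℕ) (z u : Fin (n + 1) → ℂ) (y : (Fin n → ℂ) × ℝ) :
    Az n z y + conj (Az n u y) = y.2 + Qf (fun k => z k.castSucc) (fun k => u k.castSucc)
      (-(I / 2) * (z (Fin.last n) - conj (u (Fin.last n)))) y.1 := by
  unfold Az Qf gq sIm
  simp only [map_mul, map_sub, map_add, map_sum, map_pow, Complex.conj_conj, Complex.conj_I,
    map_ofNat, map_div₀, map_one, Complex.conj_ofReal]
  simp only [Finset.sum_add_distrib, ← Finset.mul_sum]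
  have : ∀ k : Fin n, (y.1 k - conj (u k.castSucc)) ^ 2 =
    (conj (u k.castSucc) - y.1 k) ^ 2 := fun k => by ring
  simp_rw [this]
  push_cast
  ring

lemma rho_add_re (n : ℕ) (z u : Fin (n + 1) → ℂ) (hz : z ∈ TB n) (hu : u ∈ TB n) :
    0 < (-(I / 2) * (z (Fin.last n) - conj (u (Fin.last n)))).re -
      ∑ k : Fin n, (1 / 2) * ((z k.castSucc).im ^ 2 + (u k.castSucc).im ^ 2) := by
  unfold TB at hz hu
  rw [Set.mem_ofPred_eq] at hz hu
  rw [← Finset.mul_sum, Finset.sum_add_distrib]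
  have : (-(I / 2) * (z (Fin.last n) - conj (u (Fin.last n)))).re =
      (1 / 2) * ((z (Fin.last n)).im + (u (Fin.last n)).im) := by
    simp
  rw [this]
  linarith

lemma rho2_eq (n : ℕ) (z u : Fin (n + 1) → ℂ) :
    rho2 n z u = -(I / 2) * (z (Fin.last n) - conj (u (Fin.last n))) +
      ∑ k : Fin n, (1 / 4) * (z k.castSucc - conj (u k.castSucc)) ^ 2 := by
  unfold rho2
  rw [← Finset.mul_sum]
  ring

lemma Az_re2 (n : ℕ) (z : Fin (n + 1) → ℂ) (y : (Fin n → ℂ) × ℝ) :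
    ((2 * (Az n z y).re : ℝ) : ℂ) = y.2 + Qf (fun k => z k.castSucc) (fun k => z k.castSucc)
      (-(I / 2) * (z (Fin.last n) - conj (z (Fin.last n)))) y.1 := by
  rw [← Az_add, Complex.add_conj]

lemma Az_pos (n : ℕ) (z : Fin (n + 1) → ℂ) (hz : z ∈ TB n) (y : (Fin n → ℂ) × ℝ) (hy : 0 < y.2) :
    0 < (Az n z y).re := by
  have h := congrArg Complex.re (Az_re2 n z y)
  have h2 := Qf_re _ _ _ (rho_add_re n z z hz hz) y.1
  rw [Complex.add_re, Complex.ofReal_re, Complex.ofReal_re] at h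
  linarith

lemma ae_pos (n : ℕ) : ∀ᵐ y ∂(mW n), 0 < y.2 := by
  have h1 : ∀ᵐ x ∂mI, 0 < x := ae_restrict_mem measurableSet_Ioi
  exact Measure.quasiMeasurePreserving_snd.ae h1

lemma rpow_meas (t : ℝ) : Measurable (fun x : ℝ => x ^ t) := measurable_id.pow_const _

lemma bd_int (n : ℕ) {p t : ℝ} (ht : -1 < t) (hp : (n : ℝ) + 2 < p - t)
    (z : Fin (n + 1) → ℂ) (hz : z ∈ TB n) :
    Integrable (fun q : ((Fin n → ℂ) × ℝ) × ℝ =>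
      q.1.2 ^ t * ‖Az n z q.1 + (1 / 2 : ℝ) * q.2 * I‖ ^ (-p)) ((mW n).prod volume) := by
  have hn : (0 : ℝ) ≤ n := n.cast_nonneg
  have hm : Measurable (fun q : ((Fin n → ℂ) × ℝ) × ℝ =>
      q.1.2 ^ t * ‖Az n z q.1 + (1 / 2 : ℝ) * q.2 * I‖ ^ (-p)) := by
    have h1 : Measurable (fun q : ((Fin n → ℂ) × ℝ) × ℝ => Az n z q.1 + (1 / 2 : ℝ) * q.2 * I) := by
      have := (Az_cont n z).measurable
      fun_prop
    exact ((rpow_meas t).comp (by fun_prop)).mul ((rpow_meas (-p)).comp h1.norm)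
  rw [integrable_prod_iff hm.aestronglyMeasurable]
  constructor
  · filter_upwards [ae_pos n] with y hy
    exact (line_int (by linarith) (Az_pos n z hz y hy) (by norm_num)).const_mul _
  · have hK := (K_int _ _ _ (σ := p - 1) ht (by linarith) (rho_add_re n z z hz hz)).norm.const_mul
      (2 ^ (p - 1) * ((1 / 2 : ℝ)⁻¹ * ∫ x : ℝ, (1 + ‖x‖ ^ 2) ^ (-p / 2)))
    refine hK.congr ?_
    filter_upwards [ae_pos n] with y hy
    have hA := Az_pos n z hz y hy
    simp only [← Az_re2]
    have e : ∀ x : ℝ, ‖y.2 ^ t * ‖Az n z y + (1 / 2 : ℝ) * x * I‖ ^ (-p)‖ =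
        y.2 ^ t * ‖Az n z y + (1 / 2 : ℝ) * x * I‖ ^ (-p) := fun x =>
      Real.norm_of_nonneg (by positivity)
    simp_rw [e]
    rw [integral_const_mul, line_val hA (by norm_num), norm_mul, Complex.norm_real,
      Real.norm_of_nonneg (by positivity), ← Complex.ofReal_neg, Complex.norm_cpow_real,
      Complex.norm_real, Real.norm_of_nonneg (by positivity),
      Real.mul_rpow (by norm_num) hA.le, neg_sub, ← neg_sub p 1, Real.rpow_neg (by norm_num)]
    have : (2 : ℝ) ^ (p - 1) ≠ 0 := by positivity
    field_simp

lemma rpow_split {a b r s : ℝ} (ha : 0 < a) (hb : 0 < b) (hr : 0 < r) (hs : 0 < s) :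
    a ^ (-r) * b ^ (-s) ≤ a ^ (-(r + s)) + b ^ (-(r + s)) := by
  have ea : a ^ (-(r + s)) = a ^ (-r) * a ^ (-s) := by rw [← Real.rpow_add ha]; congr 1; ring
  have eb : b ^ (-(r + s)) = b ^ (-r) * b ^ (-s) := by rw [← Real.rpow_add hb]; congr 1; ring
  rcases le_total a b with h | h
  · have h1 : b ^ (-s) ≤ a ^ (-s) := Real.rpow_le_rpow_of_nonpos ha h (by linarith)
    have h2 : a ^ (-r) * b ^ (-s) ≤ a ^ (-r) * a ^ (-s) :=
      mul_le_mul_of_nonneg_left h1 (by positivity)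
    have : 0 < b ^ (-(r + s)) := by positivity
    linarith
  · have h1 : a ^ (-r) ≤ b ^ (-r) := Real.rpow_le_rpow_of_nonpos hb h (by linarith)
    have h2 : a ^ (-r) * b ^ (-s) ≤ b ^ (-r) * b ^ (-s) :=
      mul_le_mul_of_nonneg_right h1 (by positivity)
    have : 0 < a ^ (-(r + s)) := by positivity
    linarith

lemma ae_pos2 (n : ℕ) : ∀ᵐ q ∂((mW n).prod (volume : Measure ℝ)), 0 < q.1.2 :=
  Measure.quasiMeasurePreserving_fst.ae (ae_pos n)

lemma F_meas (n : ℕ) (r s t : ℝ) (z u : Fin (n + 1) → ℂ) :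
    Measurable (fun w => ((rho n w ^ t : ℝ) : ℂ) * rho2 n z w ^ (-(r : ℂ))
        * rho2 n w u ^ (-(s : ℂ))) := by
  have hc : Continuous (fun w : ℂ => conj w) := Complex.continuous_conj
  have h1 : Measurable (fun w => rho2 n z w) := by
    apply Continuous.measurable
    unfold rho2
    fun_prop
  have h2 : Measurable (fun w => rho2 n w u) := by
    apply Continuous.measurable
    unfold rho2
    fun_prop
  exact ((Complex.measurable_ofReal.comp ((rpow_meas t).comp (rho_cont n).measurable)).mul
    (h1.pow_const _)).mul (h2.pow_const _)

lemma F_int (n : ℕ) (r s t : ℝ) (hr : 0 < r) (hs : 0 < s) (ht : -1 < t)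
    (hrst : (n : ℝ) + 2 < r + s - t)
    (z u : Fin (n + 1) → ℂ) (hz : z ∈ TB n) (hu : u ∈ TB n) :
    Integrable ((fun w => ((rho n w ^ t : ℝ) : ℂ) * rho2 n z w ^ (-(r : ℂ))
        * rho2 n w u ^ (-(s : ℂ))) ∘ Phi n) ((mW n).prod volume) := by
  refine Integrable.mono' ((bd_int n ht hrst z hz).add (bd_int n ht hrst u hu))
    ((F_meas n r s t z u).comp_aemeasurable (Phi_mp_TB n).aemeasurable).aestronglyMeasurable ?_
  filter_upwards [ae_pos2 n] with q hq
  have hA := Az_pos n z hz q.1 hq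
  have hB := Az_pos n u hu q.1 hq
  have key : ∀ (v : Fin (n + 1) → ℂ), 0 < (Az n v q.1).re →
      0 < ‖Az n v q.1 + (1 / 2 : ℝ) * q.2 * I‖ := by
    intro v hv
    refine lt_of_lt_of_le ?_ (Complex.re_le_norm _)
    simpa using hv
  simp only [Function.comp, Phi_rho, Pi.add_apply]
  rw [norm_mul, norm_mul, rho2_symm n u, ← Complex.ofReal_neg, ← Complex.ofReal_neg,
    Complex.norm_cpow_real, Complex.norm_cpow_real, Complex.norm_conj, rho2_Phi, rho2_Phi,
    Complex.norm_real, Real.norm_of_nonneg (by positivity), mul_assoc, ← mul_add]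
  exact mul_le_mul_of_nonneg_left (rpow_split (key z hA) (key u hB) hr hs) (by positivity)

lemma F_val (n : ℕ) (r s t : ℝ) (hr : 0 < r) (hs : 0 < s) (ht : -1 < t)
    (hrst : (n : ℝ) + 2 < r + s - t)
    (z u : Fin (n + 1) → ℂ) (hz : z ∈ TB n) (hu : u ∈ TB n) :
    ∫ q, (fun w => ((rho n w ^ t : ℝ) : ℂ) * rho2 n z w ^ (-(r : ℂ))
        * rho2 n w u ^ (-(s : ℂ))) (Phi n q) ∂((mW n).prod volume) =
      ((2 ^ (n + 2) * Real.pi ^ (n + 1) * Real.Gamma (1 + t)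
            * Real.Gamma (r + s - t - (n : ℝ) - 2) / (Real.Gamma r * Real.Gamma s) : ℝ) : ℂ)
        * rho2 n z u ^ (-((r + s - t - (n : ℝ) - 2 : ℝ) : ℂ)) := by
  have hn : (0 : ℝ) ≤ n := n.cast_nonneg
  refine (integral_prod _ (F_int n r s t hr hs ht hrst z u hz hu)).trans ?_
  simp only [Function.comp]
  have h1 : ∀ᵐ y ∂(mW n), ∫ x : ℝ, (fun w => ((rho n w ^ t : ℝ) : ℂ) * rho2 n z w ^ (-(r : ℂ))
        * rho2 n w u ^ (-(s : ℂ))) (Phi n (y, x)) =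
      ((4 * Real.pi * Real.Gamma (r + s - 1) / (Real.Gamma r * Real.Gamma s) : ℝ) : ℂ) *
      (((y.2 ^ t : ℝ) : ℂ) * (y.2 + Qf (fun k => z k.castSucc) (fun k => u k.castSucc)
      (-(I / 2) * (z (Fin.last n) - conj (u (Fin.last n)))) y.1) ^ (-((r + s - 1 : ℝ) : ℂ))) := by
    filter_upwards [ae_pos n] with y hy
    have hA := Az_pos n z hz y hy
    have hB : 0 < (conj (Az n u y)).re := by simpa using Az_pos n u hu y hy
    simp only [Phi_rho, rho2_Phi, rho2_Phi', mul_assoc (((y.2 ^ t : ℝ) : ℂ))]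
    rw [integral_const_mul, J_line hA hB hr hs (by linarith), Az_add]
    ring
  rw [integral_congr_ae h1, integral_const_mul,
    K_val _ _ _ ht (by linarith) (rho_add_re n z u hz hu), ← rho2_eq,
    show r + s - 1 - t - 1 - (n : ℝ) = r + s - t - n - 2 by ring, ← mul_assoc, ← Complex.ofReal_mul,
    add_comm t 1]
  congr 2
  have g : Real.Gamma (r + s - 1) ≠ 0 := (Real.Gamma_pos_of_pos (by linarith)).ne'
  have g1 := (Real.Gamma_pos_of_pos hr).ne'
  have g2 := (Real.Gamma_pos_of_pos hs).ne'
  field_simp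
  ring

end helpers

theorem stmt7 (n : ℕ) (r s t : ℝ) (hr : 0 < r) (hs : 0 < s) (ht : -1 < t)
    (hrst : (n : ℝ) + 2 < r + s - t)
    (z u : Fin (n + 1) → ℂ) (hz : z ∈ TB n) (hu : u ∈ TB n) :
    IntegrableOn (fun w => ((rho n w ^ t : ℝ) : ℂ) * rho2 n z w ^ (-(r : ℂ))
        * rho2 n w u ^ (-(s : ℂ))) (TB n) ∧
    ∫ w in TB n, ((rho n w ^ t : ℝ) : ℂ) * rho2 n z w ^ (-(r : ℂ)) * rho2 n w u ^ (-(s : ℂ))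
      = ((2 ^ (n + 2) * Real.pi ^ (n + 1) * Real.Gamma (1 + t)
            * Real.Gamma (r + s - t - (n : ℝ) - 2) / (Real.Gamma r * Real.Gamma s) : ℝ) : ℂ)
        * rho2 n z u ^ (-((r + s - t - (n : ℝ) - 2 : ℝ) : ℂ)) := by
  have hm := (F_meas n r s t z u).aestronglyMeasurable (μ := volume.restrict (TB n))
  constructor
  · exact ((Phi_mp_TB n).integrable_comp hm).1 (F_int n r s t hr hs ht hrst z u hz hu)
  · rw [← F_val n r s t hr hs ht hrst z u hz hu, ← (Phi_mp_TB n).map_eq]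
    refine integral_map (Phi_mp_TB n).aemeasurable ?_
    rw [(Phi_mp_TB n).map_eq]
    exact hm
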